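/- In a coherent quantale A, for any m-prime element p and compact element c: c ≤ O(p) if and only if c^⊥ ≰ p, where O(p) = ⋁{d compact : d·e = 0 for some compact e ≰ p}. -/

import Mathlib

open CompleteLattice

/-- A commutative integral quantale: a complete lattice with a commutative monoid
structure whose unit is the top element, with multiplication distributing over
arbitrary joins. -/
class CommQuantale (A : Type*) extends CompleteLattice A, CommMonoid A where
  one_eq_top : (1 : A) = ⊤
  mul_sSup_distrib : ∀ (a : A) (S : Set A), a * sSup S = ⨆ b ∈ S, a * b

namespace CommQuantale

variable {A : Type*} [CommQuantale A]

/-- m-prime element -/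
def MPrime (p : A) : Prop := p < 1 ∧ ∀ a b : A, a * b ≤ p → a ≤ p ∨ b ≤ p

/-- radical -/
def rad (a : A) : A := sInf {p : A | MPrime p ∧ a ≤ p}

/-- annihilator / negation `c^⊥ = ⋁{x | c·x = 0}` -/
def perp (c : A) : A := sSup {x : A | c * x = ⊥}

/-- residuation `c → b = ⋁{x | c·x ≤ b}` -/
def resid (c b : A) : A := sSup {x : A | c * x ≤ b}

/-- pure element -/
def IsPure (a : A) : Prop :=
  ∀ c : A, IsCompactElement c → c ≤ a → a ⊔ perp c = 1

/-- weakly pure element -/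
def IsWPure (a : A) : Prop :=
  ∀ c : A, IsCompactElement c → c ≤ a → a ⊔ resid c (rad ⊥) = 1

/-- complemented element -/
def IsComplemented (e : A) : Prop := ∃ f : A, e ⊔ f = 1 ∧ e ⊓ f = ⊥

/-- regular element: a join of complemented elements -/
def IsRegular (a : A) : Prop :=
  ∃ S : Set A, (∀ e ∈ S, IsComplemented e) ∧ a = sSup S

/-- Ker operator -/
def Ker (a : A) : A :=
  sSup {d : A | IsCompactElement d ∧ d ≤ a ∧ a ⊔ perp d = 1}

/-- O operator: `O(p) = ⋁{c compact | c^⊥ ≰ p}` -/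
def O (p : A) : A := sSup {c : A | IsCompactElement c ∧ ¬ perp c ≤ p}

/-- O operator, as in Section 4: `O(p) = ⋁{d compact | d·e = 0 for some compact e ≰ p}` -/
def O' (p : A) : A :=
  sSup {d : A | IsCompactElement d ∧ ∃ e : A, IsCompactElement e ∧ ¬ e ≤ p ∧ d * e = ⊥}

/-- algebraic quantale: every element is the join of the compact elements below it -/
def Algebraic (A : Type*) [CommQuantale A] : Prop :=
  ∀ a : A, a = sSup {c : A | IsCompactElement c ∧ c ≤ a}

/-- coherent quantale -/
def Coherent (A : Type*) [CommQuantale A] : Prop :=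
  Algebraic A ∧ IsCompactElement (1 : A) ∧
    ∀ c d : A, IsCompactElement c → IsCompactElement d → IsCompactElement (c * d)

end CommQuantale

open CommQuantale

/-!
For an m-prime `p`, the elements `d` with `d^⊥ ≰ p` form an ideal, because `(a ⊔ b)^⊥ = a^⊥ ⊓ b^⊥`
and an m-prime is meet-prime. A compact element below the join `O p` of the compact members of this
ideal lies below a finite join of them, hence in the ideal. In an algebraic quantale `d^⊥ ≰ p` is
witnessed by a compact `e ≤ d^⊥` with `e ≰ p`, so `O' p = O p`.
-/

namespace CommQuantale

variable {A : Type*} [CommQuantale A]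

instance : IsQuantale A where
  mul_sSup_distrib := CommQuantale.mul_sSup_distrib
  sSup_mul_distrib S a := by
    simpa only [mul_comm] using CommQuantale.mul_sSup_distrib a S

theorem le_one (a : A) : a ≤ 1 :=
  one_eq_top (A := A) ▸ le_top

theorem mul_le_inf (a b : A) : a * b ≤ a ⊓ b :=
  le_inf (mul_le_of_le_one_right' (le_one b)) (mul_le_of_le_one_left' (le_one a))

theorem MPrime.inf_le {p : A} (hp : MPrime p) {a b : A} : a ⊓ b ≤ p ↔ a ≤ p ∨ b ≤ p :=
  ⟨fun h => hp.2 a b ((mul_le_inf a b).trans h), Or.rec inf_le_of_left_le inf_le_of_right_le⟩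

theorem perp_eq_rightMulResiduation (c : A) : perp c = Quantale.rightMulResiduation c ⊥ := by
  simp only [perp, Quantale.rightMulResiduation, le_bot_iff]

theorem le_perp_iff {c x : A} : x ≤ perp c ↔ c * x = ⊥ := by
  rw [perp_eq_rightMulResiduation, Quantale.rightMulResiduation_le_iff_mul_le, le_bot_iff]

theorem perp_bot : perp (⊥ : A) = ⊤ :=
  top_le_iff.mp (le_perp_iff.mpr Quantale.bot_mul)

theorem perp_sup (a b : A) : perp (a ⊔ b) = perp a ⊓ perp b :=
  eq_of_forall_le_iff fun x => by
    simp only [le_inf_iff, le_perp_iff, Quantale.sup_mul_distrib, sup_eq_bot_iff]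

theorem perp_antitone : Antitone (perp : A → A) := fun a b hab => by
  rw [← sup_eq_right.mpr hab, perp_sup]
  exact inf_le_left

theorem MPrime.not_perp_finsetSup_le {p : A} (hp : MPrime p) {t : Finset A}
    (ht : ∀ d ∈ t, ¬ perp d ≤ p) : ¬ perp (t.sup id) ≤ p := by
  refine Finset.sup_induction (p := fun d => ¬ perp d ≤ p) ?_ (fun a ha b hb => ?_) ht
  · rw [perp_bot, ← one_eq_top]
    exact hp.1.not_ge
  · rw [perp_sup, hp.inf_le]
    exact not_or.mpr ⟨ha, hb⟩

theorem MPrime.le_O_iff {p c : A} (hp : MPrime p) (hc : IsCompactElement c) :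
    c ≤ O p ↔ ¬ perp c ≤ p := by
  refine ⟨fun hcO hperp => ?_, fun h => le_sSup ⟨hc, h⟩⟩
  obtain ⟨t, ht, hct⟩ := (isCompactElement_iff_exists_le_sSup_of_le_sSup A c).mp hc _ hcO
  exact hp.not_perp_finsetSup_le (fun d hd => (ht hd).2) ((perp_antitone hct).trans hperp)

theorem Algebraic.isCompactlyGenerated (hA : Algebraic A) : IsCompactlyGenerated A where
  exists_sSup_eq a := ⟨{c | IsCompactElement c ∧ c ≤ a}, fun _ hc => hc.1, (hA a).symm⟩

theorem Algebraic.not_perp_le_iff (hA : Algebraic A) {p d : A} :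
    ¬ perp d ≤ p ↔ ∃ e, IsCompactElement e ∧ ¬ e ≤ p ∧ d * e = ⊥ := by
  have := hA.isCompactlyGenerated
  rw [le_iff_compact_le_imp]
  push Not
  simp only [le_perp_iff, and_comm]

theorem Algebraic.O'_eq_O (hA : Algebraic A) (p : A) : O' p = O p := by
  simp only [O', O, hA.not_perp_le_iff]

end CommQuantale

theorem stmt17_general {A : Type*} [CommQuantale A]
    (hA : Algebraic A) (p c : A) (hp : MPrime p) (hc : IsCompactElement c) :
    c ≤ O' p ↔ ¬ perp c ≤ p := by
  rw [hA.O'_eq_O, hp.le_O_iff hc]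

theorem stmt17 {A : Type*} [CommQuantale A]
    (hcoh : Coherent A) (p c : A) (hp : MPrime p) (hc : IsCompactElement c) :
    c ≤ O' p ↔ ¬ perp c ≤ p :=
  stmt17_general hcoh.1 p c hp hc
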